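/- A finite group G satisfies |cod(G)| ≤ 2 if and only if G is an elementary abelian p-group for some prime p (including the trivial group, which has |cod(G)| = 1). -/

import Mathlib

open CategoryTheory

noncomputable def repKer {G : Type} [Group G] (V : FDRep ℂ G) : Subgroup G :=
  (Representation.asGroupHom V.ρ).ker

noncomputable def cod {G : Type} [Group G] (V : FDRep ℂ G) : ℕ :=
  (repKer V).index / Module.finrank ℂ V

/-- The set of irreducible character codegrees of `G`. -/
noncomputable def codSet (G : Type) [Group G] : Set ℕ :=
  {n | ∃ V : FDRep ℂ G, Simple V ∧ cod V = n}

/-!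
Let every codegree of `G` be `1` or `m`. If `M` is a maximal normal subgroup of `G`, the nontrivial
irreducible representations of `H = G ⧸ M` are faithful, so they all have the same degree
`d = |H| / m`. They are the only constituents of the augmentation ideal of `ℂ[H]`, whose dimension
is `|H| - 1`; hence `d` divides both `|H|` and `|H| - 1`, so `d = 1` and `m = |H| = p` is prime.

Now let `V` be any nontrivial irreducible representation of `G`, of degree `d`, and
`K = G ⧸ ker V`. Then `|K| = p * d` and `d ^ 2 < |K|`, so `d < p` and a Sylow `p`-subgroup `P` of
`K` is normal. A codegree of `K ⧸ P` is at most `|K ⧸ P| = d < p`, so it is `1`, whence `K ⧸ P` is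
trivial and `d = 1`. Thus `K` is cyclic of order `p`. As the irreducible representations separate
the elements of `G`, it follows that `G` is abelian of exponent dividing `p`.
-/

open Representation Module
open scoped MonoidAlgebra

section Monoid

variable {k G V : Type*} [Field k] [Monoid G] [AddCommGroup V] [Module k V]

lemma isIrreducible_of_finrank_eq_one (ρ : Representation k G V) (h : finrank k V = 1) :
    ρ.IsIrreducible where
  exists_pair_ne := by
    have := isSimpleModule_iff_finrank_eq_one.2 h
    exact ⟨⊥, ⊤, fun hbot ↦ bot_ne_top (congr_arg Subrepresentation.toSubmodule hbot)⟩
  eq_bot_or_eq_top σ := by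
    have := isSimpleModule_iff_finrank_eq_one.2 h
    exact (eq_bot_or_eq_top σ.toSubmodule).imp
      (fun hσ ↦ Subrepresentation.toSubmodule_injective hσ)
      (fun hσ ↦ Subrepresentation.toSubmodule_injective hσ)

lemma isIrreducible_ofModule' (M : Type*) [AddCommGroup M] [Module k M] [Module k[G] M]
    [IsScalarTower k k[G] M] [IsSimpleModule k[G] M] :
    (ofModule' (k := k) (G := G) M).IsIrreducible := by
  let e : (ofModule' (k := k) (G := G) M).asModule ≃ₗ[k[G]] M :=
    { asModuleEquiv _ with
      map_smul' := fun x m ↦ by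
        have h : asAlgebraHom (ofModule' (k := k) (G := G) M) = Algebra.lsmul k k M :=
          (MonoidAlgebra.lift k (M →ₗ[k] M) G).apply_symm_apply _
        exact (asModuleEquiv_map_smul _ x m).trans (by rw [h]; rfl) }
  exact (irreducible_iff_isSimpleModule_asModule _).2 (.congr e)

lemma isIrreducible_comp_iff {H : Type*} [Monoid H] {f : G →* H}
    (hf : Function.Surjective f) (ρ : Representation k H V) :
    IsIrreducible (k := k) (ρ.comp f) ↔ ρ.IsIrreducible := by
  let e : Subrepresentation (A := k) (ρ.comp f) ≃o Subrepresentation ρ :=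
    { toFun := fun σ ↦ ⟨σ.toSubmodule, hf.forall.2 σ.apply_mem_toSubmodule⟩
      invFun := fun σ ↦ ⟨σ.toSubmodule, fun g ↦ σ.apply_mem_toSubmodule (f g)⟩
      left_inv := fun _ ↦ rfl
      right_inv := fun _ ↦ rfl
      map_rel_iff' := Iff.rfl }
  exact e.isSimpleOrder_iff

lemma nontrivial_of_isIrreducible (ρ : Representation k G V) [ρ.IsIrreducible] :
    Nontrivial V :=
  IsSimpleModule.nontrivial k[G] ρ.asModule

variable [IsAlgClosed k] [FiniteDimensional k V] (ρ : Representation k G V) [ρ.IsIrreducible]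

lemma exists_eq_algebraMap_of_commute {f : End k V} (hf : ∀ g, Commute f (ρ g)) :
    ∃ c : k, f = algebraMap k (End k V) c := by
  obtain ⟨c, hc⟩ := IsIrreducible.algebraMap_intertwiningMap_bijective_of_isAlgClosed.surjective
    (⟨f, hf⟩ : IntertwiningMap ρ ρ)
  exact ⟨c, congr_arg IntertwiningMap.toLinearMap hc.symm⟩

/-- Burnside's theorem, from the density theorem and Schur's lemma. -/
lemma asAlgebraHom_surjective : Function.Surjective ρ.asAlgebraHom := by
  intro f
  have hscalar := (IsSimpleModule.algebraMap_end_bijective_of_isAlgClosed (A := k[G])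
    (V := ρ.asModule) k).surjective
  let F : End (End k[G] ρ.asModule) ρ.asModule :=
    { toFun := f
      map_add' := f.map_add
      map_smul' := hscalar.forall.2 fun c v ↦ f.map_smul c v }
  have : Module.Finite (End k[G] ρ.asModule) ρ.asModule :=
    Module.Finite.of_restrictScalars_finite k _ _
  obtain ⟨x, hx⟩ := Module.Finite.toModuleEnd_moduleEnd_surjective (R := k[G]) F
  exact ⟨x, LinearMap.ext fun v ↦ LinearMap.congr_fun hx v⟩

end Monoid

section FiniteGroup

instance finiteDimensional_monoidAlgebra {k G : Type*} [Field k] [Finite G] :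
    FiniteDimensional k k[G] :=
  .of_basis (MonoidAlgebra.basis G k)

variable {k G V : Type*} [Field k] [Group G] [AddCommGroup V] [Module k V]
  [IsAlgClosed k] [FiniteDimensional k V] (ρ : Representation k G V) [ρ.IsIrreducible]

lemma norm_eq_zero_of_ker_ne_top [Fintype G] (h : ρ.ker ≠ ⊤) : ρ.norm = 0 := by
  obtain ⟨c, hc⟩ := exists_eq_algebraMap_of_commute ρ (f := ρ.norm) fun g ↦
    (ρ.norm_comp_self g).trans (ρ.self_comp_norm g).symm
  have hc0 : c = 0 := by
    by_contra hc0
    refine h (eq_top_iff.2 fun g _ ↦ LinearMap.ext fun v ↦ ?_)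
    have := ρ.self_norm_apply g (c⁻¹ • v)
    simpa [hc, Algebra.algebraMap_eq_smul_one, hc0] using this
  rw [hc, hc0, map_zero]

lemma finrank_sq_lt_card [Finite G] (h : ρ.ker ≠ ⊤) : finrank k V ^ 2 < Nat.card G := by
  have := Fintype.ofFinite G
  have hker : LinearMap.ker ρ.asAlgebraHom.toLinearMap ≠ ⊥ := by
    intro hbot
    have hindep := (MonoidAlgebra.basis G k).linearIndependent.map' _ hbot
    refine one_ne_zero (Fintype.linearIndependent_iff.1 hindep (fun _ ↦ 1) ?_ 1)
    simpa [Representation.norm] using norm_eq_zero_of_ker_ne_top ρ h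
  have hrank := LinearMap.finrank_range_add_finrank_ker ρ.asAlgebraHom.toLinearMap
  rw [LinearMap.range_eq_top.2 (asAlgebraHom_surjective ρ), finrank_top,
    finrank_linearMap k k V V, finrank_eq_nat_card_basis (MonoidAlgebra.basis G k), ← sq] at hrank
  have hpos := (finrank_pos_iff (R := k)).2 (Submodule.nontrivial_iff_ne_bot.2 hker)
  omega

end FiniteGroup

section Integrality

lemma isIntegral_sum_smul {k A G : Type*} [CommRing k] [Ring A] [Algebra k A] [Monoid G]
    [Fintype G] (ρ : G →* A) {c : G → k} (hc : ∀ g, IsIntegral ℤ (c g)) :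
    IsIntegral ℤ (∑ g, c g • ρ g) := by
  let O := integralClosure ℤ k
  let x : O[G] := ∑ g, MonoidAlgebra.single g ⟨c g, hc g⟩
  have : Module.Finite O O[G] := .of_basis (MonoidAlgebra.basis G O)
  have hx : IsIntegral ℤ x := isIntegral_trans (A := O) x (.of_finite O x)
  have hxρ : MonoidAlgebra.lift O A G ρ x = ∑ g, c g • ρ g := by
    simp only [x, map_sum, MonoidAlgebra.lift_single]
    rfl
  exact hxρ ▸ hx.map (MonoidAlgebra.lift O A G ρ).toRingHom.toIntAlgHom

lemma dvd_of_isIntegral_div {k : Type*} [Field k] [CharZero k] {m n : ℕ} (hn : n ≠ 0)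
    (h : IsIntegral ℤ (m / n : k)) : n ∣ m := by
  have hmn : (m / n : k) = algebraMap ℚ k (m / n) := by simp
  rw [hmn, isIntegral_algebraMap_iff (algebraMap ℚ k).injective] at h
  obtain ⟨z, hz⟩ := IsIntegrallyClosed.isIntegral_iff.1 h
  rw [eq_intCast, eq_div_iff (Nat.cast_ne_zero.2 hn)] at hz
  exact Int.natCast_dvd_natCast.1 ⟨z, by rw [mul_comm]; exact_mod_cast hz.symm⟩

variable {k G V : Type*} [Field k] [Group G] [AddCommGroup V] [Module k V]

lemma commute_sum_character_inv_smul [Fintype G] (ρ : Representation k G V) (h : G) :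
    Commute (∑ g, ρ.character g⁻¹ • ρ g) (ρ h) := by
  rw [Commute, SemiconjBy, Finset.sum_mul, Finset.mul_sum]
  refine Fintype.sum_equiv (MulAut.conj h⁻¹).toEquiv _ _ fun g ↦ ?_
  have hchar : ρ.character (h⁻¹ * (g⁻¹ * h)) = ρ.character g⁻¹ := by
    simpa [mul_assoc] using char_conj ρ g⁻¹ h⁻¹
  simp [hchar, ← map_mul, mul_assoc]

variable [FiniteDimensional k V] [IsAlgClosed k]

lemma isIntegral_trace_of_pow_eq_one {f : End k V} {n : ℕ} (hn : n ≠ 0) (hf : f ^ n = 1) :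
    IsIntegral ℤ (LinearMap.trace k V f) := by
  rw [End.trace_eq_sum_roots_charpoly_of_splits (IsAlgClosed.splits _)]
  refine IsIntegral.multiset_sum fun μ hμ ↦ .of_pow (Nat.pos_of_ne_zero hn) ?_
  obtain ⟨v, hv⟩ := ((End.hasEigenvalue_iff_isRoot_charpoly f μ).2
    (Polynomial.isRoot_of_mem_roots hμ)).exists_hasEigenvector
  have hμn : μ ^ n = 1 := smul_left_injective k hv.2 <| by
    simpa [hf] using (hv.pow_apply n).symm
  exact hμn ▸ isIntegral_one

lemma isIntegral_character [Finite G] (ρ : Representation k G V) (g : G) :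
    IsIntegral ℤ (ρ.character g) :=
  isIntegral_trace_of_pow_eq_one Nat.card_pos.ne' (by rw [← map_pow, pow_card_eq_one', map_one])

variable [CharZero k] (ρ : Representation k G V) [ρ.IsIrreducible]

lemma sum_character_mul_character_inv [Fintype G] :
    ∑ g, ρ.character g * ρ.character g⁻¹ = Nat.card G := by
  have : Invertible (Nat.card G : k) := invertibleOfNonzero (Nat.cast_ne_zero.2 Nat.card_pos.ne')
  have h := char_orthonormal ρ ρ
  rwa [if_pos ⟨.refl ρ⟩, inv_mul_eq_one₀ (Invertible.ne_zero _), eq_comm] at h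

lemma sum_character_inv_smul [Fintype G] :
    ∑ g, ρ.character g⁻¹ • ρ g = algebraMap k (End k V) (Nat.card G / finrank k V) := by
  obtain ⟨c, hc⟩ := exists_eq_algebraMap_of_commute ρ (commute_sum_character_inv_smul ρ)
  have := nontrivial_of_isIrreducible ρ
  have hd : (finrank k V : k) ≠ 0 := Nat.cast_ne_zero.2 finrank_pos.ne'
  have htrace := congr_arg (LinearMap.trace k V) hc
  rw [map_sum, Algebra.algebraMap_eq_smul_one, map_smul, LinearMap.trace_one, smul_eq_mul]
    at htrace
  rw [hc, ← sum_character_mul_character_inv ρ, eq_div_of_mul_eq hd htrace.symm]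
  simp [character, mul_comm]

include ρ in
theorem finrank_dvd_card [Finite G] : finrank k V ∣ Nat.card G := by
  have := Fintype.ofFinite G
  have := nontrivial_of_isIrreducible ρ
  refine dvd_of_isIntegral_div (k := k) finrank_pos.ne' ?_
  rw [← isIntegral_algebraMap_iff (algebraMap k (End k V)).injective, ← sum_character_inv_smul ρ]
  exact isIntegral_sum_smul ρ fun g ↦ isIntegral_character ρ g⁻¹

end Integrality

section Kernel

variable {k G V : Type*} [Field k] [Group G] [AddCommGroup V] [Module k V]
  (ρ : Representation k G V)

variable {ρ} in
lemma isCyclic_of_finrank_eq_one [Finite G] (hρ : Function.Injective ρ) (h : finrank k V = 1) :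
    IsCyclic G := by
  have : FiniteDimensional k V := .of_finrank_eq_succ h
  have hbij : Function.Bijective (algebraMap k (End k V)) :=
    Algebra.finrank_eq_one_iff_bijective_algebraMap.1 (by rw [finrank_linearMap k k V V, h])
  let e : k ≃+* End k V := .ofBijective _ hbij
  exact isCyclic_of_injective_ringHom ((e.symm : End k V →* k).comp ρ) (e.symm.injective.comp hρ)

/-- The faithful representation of `G ⧸ ker ρ` through which `ρ` factors. -/
def kerQuotient : Representation k (G ⧸ ρ.ker) V :=
  QuotientGroup.lift ρ.ker ρ le_rfl

lemma kerQuotient_comp_mk' : (kerQuotient ρ).comp (QuotientGroup.mk' ρ.ker) = ρ :=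
  QuotientGroup.lift_comp_mk' ρ.ker ρ le_rfl

lemma kerQuotient_injective : Function.Injective (kerQuotient ρ) :=
  (injective_iff_map_eq_one _).2 <| QuotientGroup.mk_surjective.forall.2 fun g hg ↦
    (QuotientGroup.eq_one_iff g).2 hg

instance kerQuotient_isIrreducible [ρ.IsIrreducible] : (kerQuotient ρ).IsIrreducible :=
  (isIrreducible_comp_iff (QuotientGroup.mk'_surjective ρ.ker) (kerQuotient ρ)).1
    ((kerQuotient_comp_mk' ρ).symm ▸ ‹_›)

variable [IsAlgClosed k] [FiniteDimensional k V] [ρ.IsIrreducible]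

theorem finrank_dvd_index_ker [CharZero k] [Finite G] : finrank k V ∣ ρ.ker.index :=
  finrank_dvd_card (kerQuotient ρ)

theorem finrank_sq_lt_index_ker [Finite G] (h : ρ.ker ≠ ⊤) : finrank k V ^ 2 < ρ.ker.index := by
  refine finrank_sq_lt_card (kerQuotient ρ) fun htop ↦ h ?_
  rw [← kerQuotient_comp_mk' ρ, ← MonoidHom.comap_ker, htop, Subgroup.comap_top]

end Kernel

section Constituents

instance finiteDimensional_submodule {k R M : Type*} [Field k] [Ring R] [Algebra k R]
    [AddCommGroup M] [Module k M] [Module R M] [IsScalarTower k R M] [FiniteDimensional k M]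
    (S : Submodule R M) : FiniteDimensional k S :=
  inferInstanceAs (FiniteDimensional k (S.restrictScalars k))

lemma dvd_finrank_of_forall_simple (k : Type*) {R M : Type*} [Field k] [Ring R] [Algebra k R]
    [AddCommGroup M] [Module k M] [Module R M] [IsScalarTower k R M] [FiniteDimensional k M]
    [IsSemisimpleModule R M] {d : ℕ}
    (h : ∀ S : Submodule R M, IsSimpleModule R S → d ∣ finrank k S) : d ∣ finrank k M := by
  have : Module.Finite R M := .of_restrictScalars_finite k R M
  obtain ⟨n, S, e, hS⟩ := IsSemisimpleModule.exists_linearEquiv_fin_dfinsupp R M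
  have e' : M ≃ₗ[R] ∀ i, S i := e.trans (DFinsupp.linearEquivFunOnFintype (R := R))
  rw [(e'.restrictScalars k).finrank_eq, finrank_pi_fintype]
  exact Finset.dvd_sum fun i _ ↦ h _ (hS i)

lemma exists_simple_smul_ne_zero {R M : Type*} [Ring R] [AddCommGroup M] [Module R M]
    [IsSemisimpleModule R M] {r : R} {m : M} (h : r • m ≠ 0) :
    ∃ S : Submodule R M, IsSimpleModule R S ∧ ∃ s ∈ S, r • s ≠ 0 := by
  by_contra! hS
  have hm : m ∈ ⨆ S : {S : Submodule R M | IsSimpleModule R S}, (S : Submodule R M) := by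
    rw [← sSup_eq_iSup', IsSemisimpleModule.sSup_simples_eq_top]
    exact Submodule.mem_top
  exact h (Submodule.iSup_induction (motive := fun x ↦ r • x = 0) _ hm (fun S ↦ hS S S.2)
    (smul_zero r) fun x y hx hy ↦ by rw [smul_add, hx, hy, add_zero])

section AugmentationIdeal

universe u v

variable {k : Type u} {G : Type v} [Field k] [Group G]

lemma sum_single_mul [Fintype G] (x : k[G]) : (∑ g : G, MonoidAlgebra.single g (1 : k)) * x =
    MonoidAlgebra.lift k k G 1 x • ∑ g : G, MonoidAlgebra.single g (1 : k) := by
  induction x using MonoidAlgebra.induction_linear with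
  | zero => simp
  | add x y hx hy => rw [mul_add, map_add, add_smul, hx, hy]
  | single h a =>
    rw [Finset.sum_mul, Finset.smul_sum]
    refine Fintype.sum_equiv (Equiv.mulRight h) _ _ fun g ↦ ?_
    simp

variable (k G) in
/-- The augmentation ideal of the group algebra, encoded as a `k[G]`-submodule of `k[G]` so that its
constituents are representations of `G`. -/
noncomputable def augmentationIdeal : Submodule k[G] k[G] :=
  RingHom.ker (MonoidAlgebra.lift k k G 1)

variable [Finite G]

lemma finrank_augmentationIdeal : finrank k (augmentationIdeal k G) = Nat.card G - 1 := by
  let ε : k[G] →ₐ[k] k := MonoidAlgebra.lift k k G 1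
  have hε : LinearMap.range ε.toLinearMap = ⊤ :=
    LinearMap.range_eq_top.2 fun c ↦ ⟨algebraMap k _ c, ε.commutes c⟩
  have hrank := LinearMap.finrank_range_add_finrank_ker ε.toLinearMap
  rw [hε, finrank_top, finrank_self,
    finrank_eq_nat_card_basis (MonoidAlgebra.basis G k)] at hrank
  exact Nat.eq_sub_of_add_eq' hrank

variable [NeZero (Nat.card G : k)]

lemma eq_zero_of_forall_single_mul_eq {x : k[G]}
    (hx : ∀ g, MonoidAlgebra.single g 1 * x = x) (hε : x ∈ augmentationIdeal k G) :
    x = 0 := by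
  have := Fintype.ofFinite G
  have h : (Nat.card G : k) • x = 0 :=
    calc
      (Nat.card G : k) • x = (∑ g : G, MonoidAlgebra.single g (1 : k)) * x := by
        simp [Finset.sum_mul, hx, Nat.cast_smul_eq_nsmul]
      _ = 0 := by rw [sum_single_mul, show MonoidAlgebra.lift k k G 1 x = 0 from hε, zero_smul]
  exact (smul_eq_zero.1 h).resolve_left (NeZero.ne _)

lemma ker_ofModule'_ne_top (S : Submodule k[G] (augmentationIdeal k G)) [Nontrivial S] :
    (ofModule' (k := k) (G := G) S).ker ≠ ⊤ := by
  intro htop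
  obtain ⟨s, hs⟩ := exists_ne (0 : S)
  have hfix (g : G) : MonoidAlgebra.single g (1 : k) • s = s :=
    LinearMap.congr_fun (MonoidHom.mem_ker.1 (htop ▸ Subgroup.mem_top g)) s
  refine hs (Subtype.ext (Subtype.ext (eq_zero_of_forall_single_mul_eq (fun g ↦ ?_) s.1.2)))
  exact congr_arg (fun s : S ↦ s.1.1) (hfix g)

lemma dvd_card_sub_one_of_forall_isIrreducible {d : ℕ}
    (h : ∀ (W : Type (max u v)) [AddCommGroup W] [Module k W] [FiniteDimensional k W]
      (ρ : Representation k G W), ρ.IsIrreducible → ρ.ker ≠ ⊤ → d ∣ finrank k W) :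
    d ∣ Nat.card G - 1 := by
  rw [← finrank_augmentationIdeal (k := k)]
  refine dvd_finrank_of_forall_simple (R := k[G]) k fun S hS ↦ ?_
  have := IsSimpleModule.nontrivial k[G] S
  exact h S (ofModule' (k := k) (G := G) S) (isIrreducible_ofModule' S) (ker_ofModule'_ne_top S)

end AugmentationIdeal

end Constituents

section FDRep

universe u

variable {k G : Type u} [Field k] [Group G]

lemma isIrreducible_of_simple (V : FDRep k G) [Simple V] : IsIrreducible V.ρ where
  exists_pair_ne := by
    refine ⟨⊥, ⊤, fun h ↦ id_nonzero V ?_⟩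
    ext v
    exact (Submodule.mem_bot k).1 (show v ∈ (⊥ : Subrepresentation V.ρ).toSubmodule by
      rw [h]; exact Submodule.mem_top)
  eq_bot_or_eq_top σ := by
    let ι : FDRep.of σ.toRepresentation ⟶ V :=
      ⟨InducedCategory.homMk (ModuleCat.ofHom σ.toSubmodule.subtype), fun g ↦ rfl⟩
    have hι (v : σ.toSubmodule) : ι.hom.hom.hom v = v := rfl
    have : Mono ι := ConcreteCategory.mono_of_injective ι σ.toSubmodule.subtype_injective
    by_cases h0 : ι = 0
    · left
      refine Subrepresentation.toSubmodule_injective ((Submodule.eq_bot_iff _).2 fun v hv ↦ ?_)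
      exact (hι ⟨v, hv⟩).symm.trans (by rw [h0]; rfl)
    · right
      have := isIso_of_mono_of_nonzero h0
      refine Subrepresentation.toSubmodule_injective (Submodule.eq_top_iff'.2 fun v ↦ ?_)
      obtain ⟨w, rfl⟩ := (FDRep.isoToLinearEquiv (asIso ι)).surjective v
      exact w.2

variable [Finite G] [IsAlgClosed k] [NeZero (Nat.card G : k)]

lemma simple_iff_isIrreducible {V : FDRep k G} : Simple V ↔ IsIrreducible V.ρ := by
  refine ⟨fun _ ↦ isIrreducible_of_simple V, fun _ ↦ ?_⟩
  rw [FDRep.simple_iff_end_is_rank_one, ← (linHom.invariantsEquivFDRepHom V V).finrank_eq,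
    (invariantsEquivIntertwiningMap V.ρ V.ρ).finrank_eq,
    IsIrreducible.finrank_intertwiningMap_self]

lemma exists_simple_notMem_ker {g : G} (hg : g ≠ 1) :
    ∃ V : FDRep k G, Simple V ∧ g ∉ V.ρ.ker := by
  have hg' : (MonoidAlgebra.single g 1 - 1 : k[G]) • (1 : k[G]) ≠ 0 := by
    rw [smul_eq_mul, mul_one, sub_ne_zero, MonoidAlgebra.one_def]
    exact (MonoidAlgebra.single_left_injective one_ne_zero).ne hg
  obtain ⟨S, hS, s, hs, hne⟩ := exists_simple_smul_ne_zero hg'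
  refine ⟨FDRep.of (ofModule' (k := k) S),
    simple_iff_isIrreducible.2 (isIrreducible_ofModule' S), fun hker ↦ hne ?_⟩
  have := LinearMap.congr_fun hker ⟨s, hs⟩
  rw [sub_smul, one_smul, sub_eq_zero]
  exact congr_arg Subtype.val this

lemma eq_of_forall_simple_apply_eq {g h : G} (H : ∀ V : FDRep k G, Simple V → V.ρ g = V.ρ h) :
    g = h := by
  by_contra hne
  obtain ⟨V, hV, hgh⟩ := exists_simple_notMem_ker (k := k) (inv_mul_eq_one.not.2 hne)
  exact hgh ((MonoidHom.eq_iff _).1 (H V hV).symm)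

end FDRep

section Group

lemma ker_eq_bot_of_ne_top {G M : Type*} [Group G] [IsSimpleGroup G] [MulOneClass M] {f : G →* M}
    (hf : f.ker ≠ ⊤) : f.ker = ⊥ :=
  (IsSimpleGroup.eq_bot_or_eq_top_of_normal f.ker inferInstance).resolve_right hf

variable (G : Type*) [Group G] [Finite G]

lemma exists_normal_isSimpleGroup_quotient [Nontrivial G] :
    ∃ (M : Subgroup G) (_ : M.Normal), IsSimpleGroup (G ⧸ M) := by
  obtain ⟨M, -, ⟨hM, hM_ne⟩, hmax⟩ := Finite.exists_le_maximal
    (p := fun N : Subgroup G ↦ N.Normal ∧ N ≠ ⊤) ⟨inferInstance, bot_ne_top⟩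
  refine ⟨M, hM, { exists_pair_ne := ?_, eq_bot_or_eq_top_of_normal := fun N hN ↦ ?_ }⟩
  · exact (QuotientGroup.nontrivial_iff.2 hM_ne).exists_pair_ne
  · have hsurj := QuotientGroup.mk'_surjective M
    have hle : M ≤ N.comap (QuotientGroup.mk' M) := QuotientGroup.le_comap_mk' M N
    refine or_iff_not_imp_right.2 fun hN_ne ↦ Subgroup.comap_injective hsurj ?_
    have hcomap : N.comap (QuotientGroup.mk' M) ≠ ⊤ := fun htop ↦
      hN_ne (Subgroup.comap_injective hsurj (htop.trans (Subgroup.comap_top _).symm))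
    rw [MonoidHom.comap_bot, QuotientGroup.ker_mk']
    exact (hmax ⟨hN.comap _, hcomap⟩ hle).antisymm hle

variable {G}

lemma exists_normal_index_eq_of_card_eq_mul {p d : ℕ} [Fact p.Prime] (hd₀ : d ≠ 0) (hd : d < p)
    (hG : Nat.card G = p * d) : ∃ P : Subgroup G, P.Normal ∧ P.index = d := by
  let P : Sylow p G := default
  have hp := Fact.out (p := p.Prime)
  have hP : Nat.card P = p := by
    rw [P.card_eq_multiplicity, hG, Nat.factorization_mul hp.ne_zero hd₀, Finsupp.add_apply,
      hp.factorization_self, Nat.factorization_eq_zero_of_lt hd, add_zero, pow_one]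
  have hindex : (P : Subgroup G).index = d :=
    Nat.eq_of_mul_eq_mul_left hp.pos <| by
      rw [← hG, ← (P : Subgroup G).card_mul_index, hP]
  have hlt : Nat.card (Sylow p G) < p :=
    (Nat.le_of_dvd (Nat.pos_of_ne_zero hd₀) (hindex ▸ P.card_dvd_index)).trans_lt hd
  have hone : Nat.card (Sylow p G) = 1 :=
    (card_sylow_modEq_one p G).eq_of_lt_of_lt hlt hp.one_lt
  have := (Nat.card_eq_one_iff_unique.1 hone).1
  exact ⟨P, P.normal_of_subsingleton, hindex⟩

end Group

section Codegree

variable {G : Type} [Group G]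

lemma repKer_eq_ker (V : FDRep ℂ G) : repKer V = V.ρ.ker := by
  ext g
  simp only [repKer, MonoidHom.mem_ker, Units.ext_iff]
  rfl

lemma finrank_pos_of_simple (V : FDRep ℂ G) [Simple V] : 0 < finrank ℂ V := by
  have := isIrreducible_of_simple V
  have := nontrivial_of_isIrreducible V.ρ
  exact finrank_pos

lemma codSet_subset_of_surjective [Finite G] {H : Type} [Group H] [Finite H] {f : G →* H}
    (hf : Function.Surjective f) : codSet H ⊆ codSet G := by
  rintro _ ⟨V, _, rfl⟩
  refine ⟨FDRep.of (V.ρ.comp f), simple_iff_isIrreducible.2 ?_, ?_⟩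
  · exact (isIrreducible_comp_iff hf V.ρ).2 (isIrreducible_of_simple V)
  · have hker : repKer (FDRep.of (V.ρ.comp f)) = (repKer V).comap f := by
      simp only [repKer_eq_ker, MonoidHom.comap_ker]
      rfl
    rw [cod, hker, Subgroup.index_comap_of_surjective _ hf]
    rfl

variable [Finite G]

lemma one_mem_codSet : 1 ∈ codSet G := by
  have hker : repKer (FDRep.of (1 : Representation ℂ G ℂ)) = ⊤ := by
    rw [repKer_eq_ker]
    exact MonoidHom.ker_one
  refine ⟨FDRep.of (1 : Representation ℂ G ℂ), simple_iff_isIrreducible.2 ?_, ?_⟩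
  · exact isIrreducible_of_finrank_eq_one _ (finrank_self ℂ)
  · rw [cod, hker, Subgroup.index_top]
    exact congr_arg (1 / ·) (finrank_self ℂ)

lemma cod_le_card (V : FDRep ℂ G) : cod V ≤ Nat.card G :=
  (Nat.div_le_self _ _).trans (Nat.le_of_dvd Nat.card_pos (repKer V).index_dvd_card)

lemma ncard_codSet_le_two_iff : (codSet G).ncard ≤ 2 ↔ ∃ m, codSet G ⊆ {1, m} := by
  have hfin : (codSet G).Finite := (Set.finite_Iic (Nat.card G)).subset <| by
    rintro _ ⟨V, -, rfl⟩
    exact cod_le_card V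
  rw [← Set.ncard_sdiff_singleton_add_one one_mem_codSet hfin, Nat.add_le_add_iff_right (n := 1),
    Set.ncard_le_one_iff_subset_singleton (hfin.subset Set.sdiff_subset)]
  simp only [Set.sdiff_singleton_subset_iff]

section Simple

variable (V : FDRep ℂ G) [Simple V]

lemma cod_mul_finrank : cod V * finrank ℂ V = V.ρ.ker.index := by
  have := isIrreducible_of_simple V
  rw [cod, repKer_eq_ker, Nat.div_mul_cancel (finrank_dvd_index_ker V.ρ)]

variable {V} in
lemma finrank_lt_cod (h : V.ρ.ker ≠ ⊤) : finrank ℂ V < cod V := by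
  have := isIrreducible_of_simple V
  refine lt_of_mul_lt_mul_right ?_ (Nat.zero_le (finrank ℂ V))
  rw [cod_mul_finrank, ← sq]
  exact finrank_sq_lt_index_ker V.ρ h

variable {V} in
lemma cod_eq_of_codSet_subset {m : ℕ} (hm : codSet G ⊆ {1, m}) (h : V.ρ.ker ≠ ⊤) : cod V = m :=
  (hm ⟨V, ‹_›, rfl⟩).resolve_left
    ((Nat.succ_le_of_lt (finrank_pos_of_simple V)).trans_lt (finrank_lt_cod h)).ne'

end Simple

variable (G) in
lemma exists_simple_ker_ne_top [Nontrivial G] : ∃ V : FDRep ℂ G, Simple V ∧ V.ρ.ker ≠ ⊤ := by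
  obtain ⟨g, hg⟩ := exists_ne (1 : G)
  obtain ⟨V, hV, hgV⟩ := exists_simple_notMem_ker (k := ℂ) hg
  exact ⟨V, hV, fun htop ↦ hgV (htop ▸ Subgroup.mem_top g)⟩

lemma le_card_of_codSet_subset [Nontrivial G] {m : ℕ} (hm : codSet G ⊆ {1, m}) :
    m ≤ Nat.card G := by
  obtain ⟨V, _, hV⟩ := exists_simple_ker_ne_top G
  exact cod_eq_of_codSet_subset hm hV ▸ cod_le_card V

section IsSimpleGroup

variable [IsSimpleGroup G] {m : ℕ}

lemma mul_finrank_of_isSimpleGroup (hm : codSet G ⊆ {1, m}) {V : FDRep ℂ G} [Simple V]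
    (hV : V.ρ.ker ≠ ⊤) : m * finrank ℂ V = Nat.card G := by
  rw [← cod_eq_of_codSet_subset hm hV, cod_mul_finrank, ker_eq_bot_of_ne_top hV,
    Subgroup.index_bot]

lemma finrank_eq_one_of_isSimpleGroup (hm : codSet G ⊆ {1, m}) {V : FDRep ℂ G} [Simple V]
    (hV : V.ρ.ker ≠ ⊤) : finrank ℂ V = 1 := by
  have := isIrreducible_of_simple V
  have hmV := mul_finrank_of_isSimpleGroup hm hV
  have hm₀ : 0 < m := Nat.pos_of_mul_pos_right (hmV ▸ Nat.card_pos)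
  have hsub : finrank ℂ V ∣ Nat.card G - 1 := by
    refine dvd_card_sub_one_of_forall_isIrreducible (k := ℂ) fun W _ _ _ ρ hρ hρ_top ↦ ?_
    have : Simple (FDRep.of ρ) := (simple_iff_isIrreducible (V := FDRep.of ρ)).2 hρ
    have hmW : m * finrank ℂ W = Nat.card G :=
      mul_finrank_of_isSimpleGroup hm (V := FDRep.of ρ) hρ_top
    exact (Nat.eq_of_mul_eq_mul_left hm₀ (hmV.trans hmW.symm)).dvd
  have hcard : finrank ℂ V ∣ Nat.card G - 1 + 1 := by
    rw [Nat.sub_add_cancel Nat.card_pos]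
    exact finrank_dvd_card V.ρ
  exact Nat.dvd_one.1 ((Nat.dvd_add_right hsub).1 hcard)

lemma prime_of_codSet_subset_of_isSimpleGroup (hm : codSet G ⊆ {1, m}) : m.Prime := by
  obtain ⟨V, _, hV⟩ := exists_simple_ker_ne_top G
  have hone := finrank_eq_one_of_isSimpleGroup hm hV
  have : IsCyclic G :=
    isCyclic_of_finrank_eq_one ((MonoidHom.ker_eq_bot_iff _).1 (ker_eq_bot_of_ne_top hV)) hone
  have hprime := Group.is_simple_iff_prime_card.1 ‹IsSimpleGroup G›
  rwa [← mul_finrank_of_isSimpleGroup hm hV, hone, mul_one] at hprime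

end IsSimpleGroup

lemma prime_of_codSet_subset [Nontrivial G] {m : ℕ} (hm : codSet G ⊆ {1, m}) : m.Prime := by
  obtain ⟨M, _, _⟩ := exists_normal_isSimpleGroup_quotient G
  exact prime_of_codSet_subset_of_isSimpleGroup (G := G ⧸ M)
    ((codSet_subset_of_surjective (QuotientGroup.mk'_surjective M)).trans hm)

variable {p : ℕ} [Fact p.Prime]

lemma finrank_eq_one_of_codSet_subset (hp : codSet G ⊆ {1, p}) {V : FDRep ℂ G} [Simple V]
    (hV : V.ρ.ker ≠ ⊤) : finrank ℂ V = 1 := by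
  let K := G ⧸ V.ρ.ker
  have hcod := cod_eq_of_codSet_subset hp hV
  have hlt : finrank ℂ V < p := hcod ▸ finrank_lt_cod hV
  have hK : Nat.card K = p * finrank ℂ V := hcod ▸ (cod_mul_finrank V).symm
  obtain ⟨P, _, hP⟩ := exists_normal_index_eq_of_card_eq_mul (finrank_pos_of_simple V).ne' hlt hK
  by_contra hne
  have : Nontrivial (K ⧸ P) :=
    QuotientGroup.nontrivial_iff.2 fun htop ↦ hne (hP ▸ Subgroup.index_eq_one.2 htop)
  have hKP : codSet (K ⧸ P) ⊆ {1, p} :=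
    ((codSet_subset_of_surjective (QuotientGroup.mk'_surjective P)).trans
      (codSet_subset_of_surjective (QuotientGroup.mk'_surjective V.ρ.ker))).trans hp
  have hle : p ≤ P.index := le_card_of_codSet_subset hKP
  exact hle.not_gt (hP ▸ hlt)

lemma apply_pow_eq_one_of_codSet_subset (hp : codSet G ⊆ {1, p}) (V : FDRep ℂ G) [Simple V]
    (g : G) : V.ρ (g ^ p) = 1 := by
  by_cases hV : V.ρ.ker = ⊤
  · exact MonoidHom.mem_ker.1 (hV ▸ Subgroup.mem_top _)
  · have hindex : V.ρ.ker.index = p := by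
      rw [← cod_mul_finrank, cod_eq_of_codSet_subset hp hV,
        finrank_eq_one_of_codSet_subset hp hV, mul_one]
    exact MonoidHom.mem_ker.1 (hindex ▸ V.ρ.ker.pow_index_mem g)

lemma apply_mul_comm_of_codSet_subset (hp : codSet G ⊆ {1, p}) (V : FDRep ℂ G) [Simple V]
    (a b : G) : V.ρ (a * b) = V.ρ (b * a) := by
  by_cases hV : V.ρ.ker = ⊤
  · have htriv (g : G) : V.ρ g = 1 := MonoidHom.mem_ker.1 (hV ▸ Subgroup.mem_top g)
    rw [htriv, htriv]
  · have : IsCyclic (G ⧸ V.ρ.ker) :=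
      isCyclic_of_finrank_eq_one (kerQuotient_injective V.ρ) (finrank_eq_one_of_codSet_subset hp hV)
    exact congr_arg (kerQuotient V.ρ) (IsMulCommutative.is_comm.comm (a : G ⧸ V.ρ.ker) b)

lemma codSet_subset_of_pow_eq_one [IsMulCommutative G] (hG : ∀ g : G, g ^ p = 1) :
    codSet G ⊆ {1, p} := by
  rintro _ ⟨V, _, rfl⟩
  have := isIrreducible_of_simple V
  have hone : finrank ℂ V = 1 := IsIrreducible.finrank_eq_one_of_isMulCommutative V.ρ
  have : IsCyclic (G ⧸ V.ρ.ker) := isCyclic_of_finrank_eq_one (kerQuotient_injective V.ρ) hone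
  have hpow : ∀ x : G ⧸ V.ρ.ker, x ^ p = 1 := QuotientGroup.mk_surjective.forall.2 fun g ↦ by
    rw [← QuotientGroup.mk_pow, hG, QuotientGroup.mk_one]
  have hdvd : V.ρ.ker.index ∣ p := by
    rw [Subgroup.index_eq_card, ← IsCyclic.exponent_eq_card]
    exact Monoid.exponent_dvd_of_forall_pow_eq_one hpow
  rw [← cod_mul_finrank, hone, mul_one] at hdvd
  exact (Nat.dvd_prime Fact.out).1 hdvd

lemma codSet_subset_iff_pow_eq_one_and_comm :
    codSet G ⊆ {1, p} ↔ (∀ g : G, g ^ p = 1) ∧ ∀ a b : G, a * b = b * a := by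
  refine ⟨fun hp ↦ ⟨fun g ↦ ?_, fun a b ↦ ?_⟩, fun ⟨hpow, hcomm⟩ ↦ ?_⟩
  · exact eq_of_forall_simple_apply_eq (k := ℂ) fun V _ ↦
      (apply_pow_eq_one_of_codSet_subset hp V g).trans (map_one V.ρ).symm
  · exact eq_of_forall_simple_apply_eq (k := ℂ) fun V _ ↦ apply_mul_comm_of_codSet_subset hp V a b
  · have : IsMulCommutative G := ⟨⟨hcomm⟩⟩
    exact codSet_subset_of_pow_eq_one hpow

end Codegree

/-- A finite group `G` satisfies `|cod G| ≤ 2` iff `G` is an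
elementary abelian `p`-group for some prime `p`. -/
theorem stmt5 {G : Type} [Group G] [Finite G] :
    (codSet G).ncard ≤ 2 ↔
      ∃ p : ℕ, p.Prime ∧ (∀ g : G, g ^ p = 1) ∧ (∀ a b : G, a * b = b * a) := by
  rw [ncard_codSet_le_two_iff]
  constructor
  · rintro ⟨m, hm⟩
    rcases subsingleton_or_nontrivial G with hG | hG
    · exact ⟨2, Nat.prime_two, fun _ ↦ Subsingleton.elim _ _, fun _ _ ↦ Subsingleton.elim _ _⟩
    · have hp := prime_of_codSet_subset hm
      have := Fact.mk hp
      exact ⟨m, hp, codSet_subset_iff_pow_eq_one_and_comm.1 hm⟩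
  · rintro ⟨p, hp, hG⟩
    have := Fact.mk hp
    exact ⟨p, codSet_subset_iff_pow_eq_one_and_comm.2 hG⟩
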